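/- (Shattering with a superregular part.) Let H' ≤ H ≤ G = 𝔽₂ⁿ be subgroups, g₁, g₂, g₃ ∈ G with g₁+g₂+g₃ = 0, and z₁ ∈ H. Let A, B, C ⊆ G with |A ∩ (H'+g₁+z₁)|/|H'| = d₁, |B ∩ (H+g₂)|/|H| = d₂, |C ∩ (H+g₃)|/|H| = d₃, and suppose the indicator function of A restricted to H'+g₁+z₁ is (d₂d₃/4)-superregular on H'+g₁+z₁. Then either there are at least (1/4)·d₁d₂d₃·|H|·|H'| triples (a,b,c) with a ∈ A ∩ (H'+g₁+z₁), b ∈ B ∩ (H+g₂), c ∈ C ∩ (H+g₃), and a+b+c = 0, or H' (1/20, 3/4, log₂|H/H'|)-shatters either B on H+g₂ or C on H+g₃. -/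

import Mathlib

open scoped Classical BigOperators

noncomputable section

/-- The group `G = 𝔽₂ⁿ`. -/
abbrev G (n : ℕ) : Type := Fin n → ZMod 2

/-- The coset `H + g` (note that `-g = g` in `𝔽₂ⁿ`). -/
def coset {n : ℕ} (H : AddSubgroup (G n)) (g : G n) : Set (G n) := {x | x + g ∈ H}

/-- The entropy function `f(x) = x log x` (with `f 0 = 0`). -/
def ent (x : ℝ) : ℝ := x * Real.log x

/-- The density of `A` on the coset `H + g`. -/
def dens {n : ℕ} (A : Set (G n)) (H : AddSubgroup (G n)) (g : G n) : ℝ :=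
  (Nat.card ↥(A ∩ coset H g) : ℝ) / (Nat.card ↥H : ℝ)

/-- Mean entropy `F_A(G, H)` of partitioning `G` into cosets of `H`. -/
def meanEntG {n : ℕ} (A : Set (G n)) (H : AddSubgroup (G n)) : ℝ :=
  (∑ g : G n, ent (dens A H g)) / (Fintype.card (G n) : ℝ)

/-- Mean entropy `F_A(H + g, H')` of partitioning the coset `H + g` into cosets of `H'`. -/
def meanEntCoset {n : ℕ} (A : Set (G n)) (H H' : AddSubgroup (G n)) (g : G n) : ℝ :=
  (∑ g₁ : ↥H, ent (dens A H' (g + ↑g₁))) / (Nat.card ↥H : ℝ)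

/-- The standard bilinear form on `𝔽₂ⁿ`. -/
def dotp {n : ℕ} (x y : G n) : ZMod 2 := ∑ i, x i * y i

/-- The character value `(-1)^{⟨x, y⟩}`. -/
def chi {n : ℕ} (x y : G n) : ℝ := if dotp x y = 0 then 1 else -1

/-- Fourier coefficient `f̂_H^g(η) = E_{x ∈ H} [f(x + g) · (-1)^{⟨x, η⟩}]`. -/
def fCoeff {n : ℕ} (H : AddSubgroup (G n)) (g : G n) (f : G n → ℝ) (η : G n) : ℝ :=
  (∑ x : ↥H, f (↑x + g) * chi ↑x η) / (Nat.card ↥H : ℝ)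

/-- `f` is `ρ`-superregular on `H + g`: every Fourier coefficient at a character that is
nontrivial on `H` is at most `ρ` times the zeroth coefficient in absolute value. -/
def SuperregularOn {n : ℕ} (H : AddSubgroup (G n)) (g : G n) (ρ : ℝ) (f : G n → ℝ) : Prop :=
  ∀ η : G n, (∃ x ∈ H, dotp x η ≠ 0) →
    |fCoeff H g f η| ≤ ρ * fCoeff H g f 0

/-- `H'` `(α, β, k)`-shatters `A` on `H + g`. -/
def Shatters {n : ℕ} (H' H : AddSubgroup (G n)) (A : Set (G n)) (g : G n)
    (α β k : ℝ) : Prop :=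
  (Nat.card ↥H : ℝ) / (Nat.card ↥H' : ℝ) ≤ (2 : ℝ) ^ k ∧
  α ≤ (Nat.card {g' : ↥H //
        (Nat.card ↥(A ∩ coset H' (g + ↑g')) : ℝ) ≤ β * dens A H g * (Nat.card ↥H' : ℝ)} : ℝ) /
      (Nat.card ↥H : ℝ)

/-- Number of triangles `(a, b, c)`, `a + b + c = 0`, with `a ∈ S₁`, `b ∈ S₂`, `c ∈ S₃`. -/
def triBetween {n : ℕ} (S₁ S₂ S₃ : Set (G n)) : ℕ :=
  Nat.card {p : G n × G n × G n // p.1 ∈ S₁ ∧ p.2.1 ∈ S₂ ∧ p.2.2 ∈ S₃ ∧ p.1 + p.2.1 + p.2.2 = 0}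

/-- Number of triangles in `A`. -/
def triCount {n : ℕ} (A : Set (G n)) : ℕ := triBetween A A A

/-- The annihilator of `K`: characters trivial on `K`. -/
def ann {n : ℕ} (K : AddSubgroup (G n)) : AddSubgroup (G n) where
  carrier := {η | ∀ x ∈ K, dotp x η = 0}
  zero_mem' := by intro x _; simp [dotp]
  add_mem' := by
    intro a b ha hb x hx
    have h : dotp x (a + b) = dotp x a + dotp x b := by
      simp [dotp, mul_add, Finset.sum_add_distrib]
    rw [h, ha x hx, hb x hx, add_zero]
  neg_mem' := by
    intro a ha x hx
    have h : dotp x (-a) = -dotp x a := by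
      simp [dotp]
    rw [h, ha x hx, neg_zero]

/-- Average of `f` over the coset `v + H'`. -/
def fbar {n : ℕ} (H' : AddSubgroup (G n)) (f : G n → ℝ) (v : G n) : ℝ :=
  (∑ y : ↥H', f (v + ↑y)) / (Nat.card ↥H' : ℝ)

/-- Tower function: `tower 0 = 1`, `tower (i+1) = 2 ^ tower i`. -/
def tower : ℕ → ℕ
  | 0 => 1
  | k + 1 => 2 ^ tower k

/-- `A` is `ε`-far from triangle-free: at least `ε N` elements must be removed from `A`
to destroy all triangles. -/
def FarFromTriangleFree {n : ℕ} (A : Set (G n)) (ε : ℝ) : Prop :=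
  ∀ B ⊆ A, (∀ x ∈ B, ∀ y ∈ B, ∀ z ∈ B, x + y + z ≠ 0) →
    ε * 2 ^ n ≤ (Nat.card ↥(A \ B) : ℝ)

/-- The set of elements of a triangle. -/
def elems {n : ℕ} (p : G n × G n × G n) : Set (G n) := {p.1, p.2.1, p.2.2}

/-!
Fix the coset `H' + g₁` on which `A` is `ρ`-superregular and cut `H + g₂` and `H + g₃` into cosets
of `H'`. Every character of `H'` is of the form `x ↦ (-1)^⟨x, η⟩`, so superregularity bounds all
nontrivial Fourier coefficients of `A` on `H' + g₁`, and Cauchy–Schwarz with Parseval shows that a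
compatible pair of cosets, on which `B` and `C` have densities `b` and `c`, spans with `H' + g₁` at
least `d₁ (b c - ρ) |H'|²` triangles. If `H'` shatters neither `B` nor `C`, then for more than a
proportion `1 - 2α` of the pairs both `b > β d₂` and `c > β d₃`, so the average of `b c` is at least
`(1 - 2α) β² d₂ d₃`. For `α = 1/20`, `β = 3/4` and `ρ = d₂ d₃ / 4` this leaves at least
`d₂ d₃ / 4` after subtracting `ρ`.
-/

open scoped ComplexConjugate

section Fourier

variable {K : Type*} [AddCommGroup K] [Fintype K]

/-- The unnormalised Fourier transform of `f` at the additive character `ψ`. -/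
def charSum (f : K → ℂ) (ψ : AddChar K ℂ) : ℂ := ∑ x, f x * ψ x

lemma charSum_zero (f : K → ℂ) : charSum f 0 = ∑ x, f x := by simp [charSum]

lemma sum_charSum_mul_charSum_mul_charSum (f u v : K → ℂ) :
    ∑ ψ, charSum f ψ * charSum u ψ * charSum v ψ =
      Fintype.card K * ∑ x, ∑ y, f x * u y * v (-(x + y)) := by
  have expand (ψ : AddChar K ℂ) : charSum f ψ * charSum u ψ * charSum v ψ =
      ∑ x, ∑ y, ∑ z, f x * u y * v z * ψ (x + y + z) := by
    rw [charSum, charSum, charSum, Finset.sum_mul_sum]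
    simp only [Finset.sum_mul]
    simp only [Finset.mul_sum, AddChar.map_add_eq_mul]
    refine Finset.sum_congr rfl fun x _ ↦ Finset.sum_congr rfl fun y _ ↦ ?_
    exact Finset.sum_congr rfl fun z _ ↦ by ring
  calc ∑ ψ, charSum f ψ * charSum u ψ * charSum v ψ
      = ∑ x, ∑ y, ∑ z, f x * u y * v z * ∑ ψ : AddChar K ℂ, ψ (x + y + z) := by
        simp only [expand, Finset.mul_sum]
        rw [Finset.sum_comm]
        refine Finset.sum_congr rfl fun x _ ↦ ?_
        rw [Finset.sum_comm]
        exact Finset.sum_congr rfl fun y _ ↦ Finset.sum_comm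
    _ = Fintype.card K * ∑ x, ∑ y, f x * u y * v (-(x + y)) := by
        simp only [AddChar.sum_apply_eq_ite, add_eq_zero_iff_neg_eq, Finset.mul_sum, mul_ite,
          mul_zero, Finset.sum_ite_eq, Finset.mem_univ, if_true]
        exact Finset.sum_congr rfl fun x _ ↦ Finset.sum_congr rfl fun y _ ↦ mul_comm _ _

lemma sum_norm_charSum_sq (f : K → ℂ) :
    ∑ ψ, ‖charSum f ψ‖ ^ 2 = Fintype.card K * ∑ x, ‖f x‖ ^ 2 := by
  -- The transform of `δ₀` is `1`, and that of `x ↦ conj (f (-x))` is the conjugate of that of `f`.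
  have charSum_delta (ψ : AddChar K ℂ) : charSum (Pi.single 0 1) ψ = 1 := by
    simp [charSum, Pi.single_apply]
  have charSum_conj (ψ : AddChar K ℂ) :
      charSum (fun x ↦ conj (f (-x))) ψ = conj (charSum f ψ) := by
    simp only [charSum, map_sum, map_mul, ← AddChar.map_neg_eq_conj]
    exact (Equiv.sum_comp (Equiv.neg K) _).symm.trans (by simp)
  have h := sum_charSum_mul_charSum_mul_charSum (Pi.single 0 1) f fun x ↦ conj (f (-x))
  simp only [charSum_delta, charSum_conj, one_mul, Complex.mul_conj'] at h
  simp only [Pi.single_apply, ite_mul, one_mul, zero_mul, Finset.sum_ite_irrel,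
    Finset.sum_const_zero, Finset.sum_ite_eq', Finset.mem_univ, if_true, zero_add, neg_neg,
    Complex.mul_conj'] at h
  exact_mod_cast h

theorem norm_card_mul_sum_sub_le (f u v : K → ℂ) {c : ℝ} (hc : 0 ≤ c)
    (hf : ∀ ψ ≠ 0, ‖charSum f ψ‖ ≤ c) :
    ‖Fintype.card K * ∑ x, ∑ y, f x * u y * v (-(x + y)) - (∑ x, f x) * (∑ x, u x) * ∑ x, v x‖ ≤
      c * (Fintype.card K * (√(∑ x, ‖u x‖ ^ 2) * √(∑ x, ‖v x‖ ^ 2))) := by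
  rw [← sum_charSum_mul_charSum_mul_charSum, ← charSum_zero f, ← charSum_zero u, ← charSum_zero v,
    ← Finset.sum_erase_eq_sub (Finset.mem_univ 0)]
  calc ‖∑ ψ ∈ Finset.univ.erase 0, charSum f ψ * charSum u ψ * charSum v ψ‖
      ≤ ∑ ψ ∈ Finset.univ.erase 0, c * (‖charSum u ψ‖ * ‖charSum v ψ‖) := by
        refine norm_sum_le_of_le _ fun ψ hψ ↦ ?_
        rw [mul_assoc, norm_mul, norm_mul]
        gcongr
        exact hf ψ (Finset.ne_of_mem_erase hψ)
    _ ≤ ∑ ψ, c * (‖charSum u ψ‖ * ‖charSum v ψ‖) :=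
        Finset.sum_le_sum_of_subset_of_nonneg (Finset.subset_univ _) fun _ _ _ ↦ by positivity
    _ ≤ c * (√(∑ ψ, ‖charSum u ψ‖ ^ 2) * √(∑ ψ, ‖charSum v ψ‖ ^ 2)) := by
        rw [← Finset.mul_sum]
        gcongr
        exact Real.sum_mul_le_sqrt_mul_sqrt _ _ _
    _ = c * (Fintype.card K * (√(∑ x, ‖u x‖ ^ 2) * √(∑ x, ‖v x‖ ^ 2))) := by
        rw [sum_norm_charSum_sq, sum_norm_charSum_sq, Real.sqrt_mul (by positivity),
          Real.sqrt_mul (by positivity), mul_mul_mul_comm, Real.mul_self_sqrt (by positivity)]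

end Fourier

section Characters

lemma exists_forall_eq_dotProduct {F ι : Type*} [Field F] [Fintype ι] {p : Submodule F (ι → F)}
    (φ : p →ₗ[F] F) : ∃ η : ι → F, ∀ x : p, φ x = (x : ι → F) ⬝ᵥ η := by
  obtain ⟨Φ, hΦ⟩ := φ.exists_extend
  obtain ⟨η, rfl⟩ := (dotProductEquiv F ι).surjective Φ
  exact ⟨η, fun x ↦ by simp [← hΦ, dotProduct_comm]⟩

lemma addChar_apply_eq_one_or_neg_one {V : Type*} [AddCommGroup V] [Module (ZMod 2) V]
    (ψ : AddChar V ℂ) (x : V) : ψ x = 1 ∨ ψ x = -1 := by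
  rw [← sq_eq_one_iff, sq, ← AddChar.map_add_eq_mul, ZModModule.add_self,
    AddChar.map_zero_eq_one]

lemma exists_linearMap_forall_addChar_apply_eq {V : Type*} [AddCommGroup V] [Module (ZMod 2) V]
    (ψ : AddChar V ℂ) :
    ∃ φ : V →ₗ[ZMod 2] ZMod 2, ∀ x, ψ x = if φ x = 0 then 1 else -1 := by
  have hneg : (-1 : ℂ) ≠ 1 := by norm_num
  have two : (1 : ZMod 2) + 1 = 0 := rfl
  let φ : V →+ ZMod 2 :=
    { toFun x := if ψ x = 1 then 0 else 1
      map_zero' := by simp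
      map_add' x y := by
        rcases addChar_apply_eq_one_or_neg_one ψ x with hx | hx <;>
          rcases addChar_apply_eq_one_or_neg_one ψ y with hy | hy <;>
          simp [AddChar.map_add_eq_mul, hx, hy, hneg, two] }
  refine ⟨φ.toZModLinearMap 2, fun x ↦ ?_⟩
  rcases addChar_apply_eq_one_or_neg_one ψ x with hx | hx <;> simp [φ, hx, hneg]

variable {n : ℕ}

lemma chi_add_left (x y η : G n) : chi (x + y) η = chi x η * chi y η := by
  have dotp_add : dotp (x + y) η = dotp x η + dotp y η := add_dotProduct ..
  have add_eq_zero : ∀ a b : ZMod 2, a + b = 0 ↔ (a = 0 ↔ b = 0) := by decide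
  by_cases hx : dotp x η = 0 <;> by_cases hy : dotp y η = 0 <;>
    simp [chi, dotp_add, add_eq_zero, hx, hy]

/-- The character `x ↦ (-1)^⟨x, η⟩` of the subgroup `K`. -/
def dotChar (K : AddSubgroup (G n)) (η : G n) : AddChar K ℂ where
  toFun x := (chi (x : G n) η : ℂ)
  map_zero_eq_one' := by simp [chi, dotp]
  map_add_eq_mul' x y := by simp [chi_add_left]

lemma dotChar_surjective (K : AddSubgroup (G n)) : Function.Surjective (dotChar K) := by
  intro ψ
  obtain ⟨φ, hφ⟩ :=
    exists_linearMap_forall_addChar_apply_eq (V := AddSubgroup.toZModSubmodule 2 K) ψ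
  obtain ⟨η, hη⟩ := exists_forall_eq_dotProduct φ
  refine ⟨η, ?_⟩
  ext x
  have hx : ψ x = if dotp (x : G n) η = 0 then 1 else -1 := by
    rw [show dotp (x : G n) η = φ x from (hη x).symm]
    exact hφ x
  simp only [dotChar, AddChar.coe_mk, chi, hx]
  split_ifs <;> simp

lemma dotChar_zero (K : AddSubgroup (G n)) : dotChar K 0 = 0 := by
  ext x
  simp [dotChar, chi, dotp]

lemma exists_dotp_ne_zero_of_dotChar_ne_zero {K : AddSubgroup (G n)} {η : G n}
    (h : dotChar K η ≠ 0) : ∃ x ∈ K, dotp x η ≠ 0 := by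
  contrapose! h
  ext x
  simp [dotChar, chi, h x x.2]

end Characters

section Counting

variable {n : ℕ}

lemma G.two_eq_zero : (2 : G n) = 0 := rfl

lemma G.add_add_self (x g : G n) : x + g + g = x := by
  linear_combination g * G.two_eq_zero

lemma add_mem_coset_iff {K : AddSubgroup (G n)} {x g : G n} : x + g ∈ coset K g ↔ x ∈ K := by
  simp [coset, G.add_add_self]

/-- The indicator function of `A` on the coset `K + g`, translated to `K`. -/
def cosetIndicator (A : Set (G n)) (K : AddSubgroup (G n)) (g : G n) (x : K) : ℂ :=
  A.indicator 1 (x + g)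

lemma sum_indicator_inter_coset_mul (A : Set (G n)) (K : AddSubgroup (G n)) (g : G n)
    (F : G n → ℂ) :
    ∑ a, (A ∩ coset K g).indicator 1 a * F a = ∑ x, cosetIndicator A K g x * F (x + g) := by
  have restrict (x : G n) : (A ∩ coset K g).indicator 1 (x + g) * F (x + g) =
      if x ∈ K then A.indicator 1 (x + g) * F (x + g) else 0 := by
    by_cases hx : x ∈ K <;> simp [Set.indicator_apply, add_mem_coset_iff, hx]
  rw [← Equiv.sum_comp (Equiv.addRight g)]
  simp only [Equiv.coe_addRight, restrict]
  rw [← Finset.sum_filter, Finset.sum_subtype (p := (· ∈ K)) _ (by simp)]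
  rfl

lemma sum_cosetIndicator (A : Set (G n)) (K : AddSubgroup (G n)) (g : G n) :
    ∑ x, cosetIndicator A K g x = (dens A K g * Nat.card K : ℝ) := by
  have hK : (Nat.card K : ℝ) ≠ 0 := by exact_mod_cast Nat.card_pos.ne'
  have h := sum_indicator_inter_coset_mul A K g 1
  simp only [Pi.one_apply, mul_one] at h
  rw [dens, div_mul_cancel₀ _ hK, ← h, Nat.card_eq_fintype_card, Fintype.card_subtype]
  simp [Set.indicator_apply]

lemma sum_norm_cosetIndicator_sq (A : Set (G n)) (K : AddSubgroup (G n)) (g : G n) :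
    ∑ x, ‖cosetIndicator A K g x‖ ^ 2 = dens A K g * Nat.card K := by
  have h (x : K) : ((‖cosetIndicator A K g x‖ ^ 2 : ℝ) : ℂ) = cosetIndicator A K g x := by
    by_cases hx : (x : G n) + g ∈ A <;> simp [cosetIndicator, hx]
  apply Complex.ofReal_injective
  rw [← sum_cosetIndicator, Complex.ofReal_sum]
  exact Finset.sum_congr rfl fun x _ ↦ h x

lemma dens_nonneg (A : Set (G n)) (K : AddSubgroup (G n)) (g : G n) : 0 ≤ dens A K g := by
  unfold dens
  positivity

lemma dens_le_one (A : Set (G n)) (K : AddSubgroup (G n)) (g : G n) : dens A K g ≤ 1 := by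
  have inj : Function.Injective fun a : ↥(A ∩ coset K g) ↦ (⟨a + g, a.2.2⟩ : K) :=
    fun a b h ↦ Subtype.ext (add_right_cancel (congrArg Subtype.val h))
  exact div_le_one_of_le₀ (by exact_mod_cast Nat.card_le_card_of_injective _ inj) (by positivity)

lemma charSum_cosetIndicator_dotChar (A : Set (G n)) (K : AddSubgroup (G n)) (g η : G n) :
    charSum (cosetIndicator A K g) (dotChar K η) =
      (fCoeff K g (A.indicator 1) η * Nat.card K : ℝ) := by
  have hK : (Nat.card K : ℝ) ≠ 0 := by exact_mod_cast Nat.card_pos.ne'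
  rw [fCoeff, div_mul_cancel₀ _ hK]
  simp [charSum, cosetIndicator, dotChar, Set.indicator_apply, apply_ite Complex.ofReal]

lemma SuperregularOn.norm_charSum_le {A : Set (G n)} {K : AddSubgroup (G n)} {g : G n} {ρ : ℝ}
    (h : SuperregularOn K g ρ (A.indicator 1)) {ψ : AddChar K ℂ} (hψ : ψ ≠ 0) :
    ‖charSum (cosetIndicator A K g) ψ‖ ≤ ρ * (dens A K g * Nat.card K) := by
  obtain ⟨η, rfl⟩ := dotChar_surjective K ψ
  have h_zero : dens A K g * Nat.card K = fCoeff K g (A.indicator 1) 0 * Nat.card K := by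
    apply Complex.ofReal_injective
    rw [← sum_cosetIndicator, ← charSum_cosetIndicator_dotChar, dotChar_zero, charSum_zero]
  rw [charSum_cosetIndicator_dotChar, Complex.norm_real, Real.norm_eq_abs, abs_mul, Nat.abs_cast,
    h_zero, ← mul_assoc]
  gcongr
  exact h η (exists_dotp_ne_zero_of_dotChar_ne_zero hψ)

lemma triBetween_eq_sum (S₁ S₂ S₃ : Set (G n)) :
    (triBetween S₁ S₂ S₃ : ℂ) =
      ∑ a, S₁.indicator 1 a * ∑ b, S₂.indicator 1 b * S₃.indicator 1 (-(a + b)) := by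
  have e : {p : G n × G n × G n //
        p.1 ∈ S₁ ∧ p.2.1 ∈ S₂ ∧ p.2.2 ∈ S₃ ∧ p.1 + p.2.1 + p.2.2 = 0} ≃
      {p : G n × G n // p.1 ∈ S₁ ∧ p.2 ∈ S₂ ∧ -(p.1 + p.2) ∈ S₃} :=
    { toFun p := ⟨(p.1.1, p.1.2.1), p.2.1, p.2.2.1,
        neg_eq_of_add_eq_zero_right p.2.2.2.2 ▸ p.2.2.2.1⟩
      invFun p := ⟨(p.1.1, p.1.2, -(p.1.1 + p.1.2)), p.2.1, p.2.2.1, p.2.2.2, add_neg_cancel _⟩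
      left_inv p := by
        ext1
        exact Prod.ext rfl (Prod.ext rfl (neg_eq_of_add_eq_zero_right p.2.2.2.2))
      right_inv _ := rfl }
  rw [triBetween, Nat.card_congr e, Nat.card_eq_fintype_card, Fintype.card_subtype,
    Finset.card_filter, ← Finset.univ_product_univ, Finset.sum_product]
  push_cast
  refine Finset.sum_congr rfl fun a _ ↦ ?_
  rw [Finset.mul_sum]
  refine Finset.sum_congr rfl fun b _ ↦ ?_
  simp only [Set.indicator_apply, Pi.one_apply, ite_and, mul_ite, mul_one, mul_zero]
  split_ifs <;> rfl

lemma triBetween_coset_eq_sum (A B C : Set (G n)) (K : AddSubgroup (G n)) {g₁ g₂ g₃ : G n}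
    (hg : g₁ + g₂ + g₃ = 0) :
    (triBetween (A ∩ coset K g₁) (B ∩ coset K g₂) (C ∩ coset K g₃) : ℂ) =
      ∑ x, ∑ y, cosetIndicator A K g₁ x * cosetIndicator B K g₂ y *
        cosetIndicator C K g₃ (-(x + y)) := by
  have third (x y : K) : (C ∩ coset K g₃).indicator 1 (-(x + g₁ + (y + g₂) : G n)) =
      cosetIndicator C K g₃ (-(x + y)) := by
    have eq : -(x + g₁ + (y + g₂) : G n) = ↑(-(x + y)) + g₃ := by
      push_cast
      linear_combination -hg
    rw [eq, cosetIndicator]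
    simp only [Set.indicator_apply, Set.mem_inter_iff, add_mem_coset_iff, SetLike.coe_mem, and_true]
  rw [triBetween_eq_sum, sum_indicator_inter_coset_mul]
  simp only [sum_indicator_inter_coset_mul, third, Finset.mul_sum, mul_assoc]

theorem le_triBetween_of_superregularOn {A : Set (G n)} (B C : Set (G n)) {K : AddSubgroup (G n)}
    {g₁ g₂ g₃ : G n} (hg : g₁ + g₂ + g₃ = 0) {ρ : ℝ} (hρ : 0 ≤ ρ)
    (h : SuperregularOn K g₁ ρ (A.indicator 1)) :
    dens A K g₁ * (dens B K g₂ * dens C K g₃ - ρ) * Nat.card K ^ 2 ≤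
      triBetween (A ∩ coset K g₁) (B ∩ coset K g₂) (C ∩ coset K g₃) := by
  have hK : (0 : ℝ) < Nat.card K := by exact_mod_cast Nat.card_pos
  have hA := dens_nonneg A K g₁
  have sqrt_le (D : Set (G n)) (g : G n) : √(dens D K g * Nat.card K) ≤ √(Nat.card K) :=
    Real.sqrt_le_sqrt (mul_le_of_le_one_left hK.le (dens_le_one D K g))
  have key := norm_card_mul_sum_sub_le (cosetIndicator A K g₁) (cosetIndicator B K g₂)
    (cosetIndicator C K g₃) (by positivity) fun ψ hψ ↦ h.norm_charSum_le hψ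
  rw [← triBetween_coset_eq_sum A B C K hg, sum_cosetIndicator, sum_cosetIndicator,
    sum_cosetIndicator, sum_norm_cosetIndicator_sq, sum_norm_cosetIndicator_sq,
    ← Nat.card_eq_fintype_card] at key
  norm_cast at key
  rw [Real.norm_eq_abs] at key
  have error_le := key.trans (mul_le_mul_of_nonneg_left (mul_le_mul_of_nonneg_left
    (mul_le_mul (sqrt_le B g₂) (sqrt_le C g₃) (by positivity) (by positivity)) hK.le)
    (by positivity))
  rw [Real.mul_self_sqrt hK.le] at error_le
  push_cast at error_le
  refine le_of_mul_le_mul_left ?_ hK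
  linarith [(abs_le.1 error_le).1]

end Counting

section Averaging

lemma mul_card_sub_le_sum_mul {ι : Type*} [Fintype ι] {p q : ι → ℝ} (hp : ∀ i, 0 ≤ p i)
    (hq : ∀ i, 0 ≤ q i) {s t : ℝ} (hs : 0 ≤ s) (ht : 0 ≤ t) :
    s * t * (Fintype.card ι - Finset.card {i | p i ≤ s} - Finset.card {i | q i ≤ t}) ≤
      ∑ i, p i * q i := by
  have pointwise (i : ι) : s * t * (1 - (if p i ≤ s then 1 else 0) - if q i ≤ t then 1 else 0) ≤
      p i * q i := by
    have hst := mul_nonneg hs ht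
    have hpq := mul_nonneg (hp i) (hq i)
    split_ifs with hps hqt hqt
    · linarith
    · linarith
    · linarith
    · simpa using mul_le_mul (not_le.1 hps).le (not_le.1 hqt).le ht (hp i)
  refine le_of_eq_of_le ?_ (Finset.sum_le_sum fun i _ ↦ pointwise i)
  simp [← Finset.mul_sum, Finset.sum_sub_distrib]

variable {n : ℕ}

/-- The translates `h ∈ H` for which `A` has density at most `β` times its density on `H + g` on
the coset `H' + g + h`; `H'` shatters `A` on `H + g` when there are many of them. -/
def sparseTranslates (H' H : AddSubgroup (G n)) (A : Set (G n)) (g : G n) (β : ℝ) : Finset H :=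
  {h | dens A H' (g + h) ≤ β * dens A H g}

lemma mem_sparseTranslates {H' H : AddSubgroup (G n)} {A : Set (G n)} {g : G n} {β : ℝ} {h : H} :
    h ∈ sparseTranslates H' H A g β ↔ dens A H' (g + h) ≤ β * dens A H g := by
  simp [sparseTranslates]

lemma shatters_logb_iff (H' H : AddSubgroup (G n)) (A : Set (G n)) (g : G n) (α β : ℝ) :
    Shatters H' H A g α β (Real.logb 2 (Nat.card H / Nat.card H')) ↔
      α * Nat.card H ≤ (sparseTranslates H' H A g β).card := by
  have hH : (0 : ℝ) < Nat.card H := by exact_mod_cast Nat.card_pos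
  have hH' : (0 : ℝ) < Nat.card H' := by exact_mod_cast Nat.card_pos
  have card_eq : Nat.card {h : H //
      (Nat.card ↥(A ∩ coset H' (g + h)) : ℝ) ≤ β * dens A H g * Nat.card H'} =
      (sparseTranslates H' H A g β).card :=
    Nat.subtype_card _ fun h ↦ by rw [mem_sparseTranslates, dens.eq_def A H', div_le_iff₀ hH']
  rw [Shatters, card_eq, Real.rpow_logb (by norm_num) (by norm_num) (by positivity),
    le_div_iff₀ hH]
  exact and_iff_right le_rfl

lemma le_sum_dens_mul_dens (H' H : AddSubgroup (G n)) (B C : Set (G n)) (g₂ g₃ : G n) (w : H)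
    {β : ℝ} (hβ : 0 ≤ β) :
    β ^ 2 * (dens B H g₂ * dens C H g₃) * (Nat.card H - (sparseTranslates H' H B g₂ β).card -
        (sparseTranslates H' H C g₃ β).card) ≤
      ∑ z : H, dens B H' (g₂ + z) * dens C H' (g₃ + ↑(z + w)) := by
  have card_shift : Finset.card {z : H | dens C H' (g₃ + ↑(z + w)) ≤ β * dens C H g₃} =
      (sparseTranslates H' H C g₃ β).card :=
    Finset.card_equiv (Equiv.addRight w) fun z ↦ by
      rw [mem_sparseTranslates, Finset.mem_filter_univ, Equiv.coe_addRight]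
  have key := mul_card_sub_le_sum_mul (p := fun z : H ↦ dens B H' (g₂ + z))
    (q := fun z : H ↦ dens C H' (g₃ + ↑(z + w))) (fun _ ↦ dens_nonneg ..) (fun _ ↦ dens_nonneg ..)
    (mul_nonneg hβ (dens_nonneg B H g₂)) (mul_nonneg hβ (dens_nonneg C H g₃))
  rw [card_shift, ← Nat.card_eq_fintype_card] at key
  refine le_of_eq_of_le ?_ key
  rw [sparseTranslates]
  ring

lemma sum_triBetween_coset_le {H' H : AddSubgroup (G n)} (hle : H' ≤ H) (S B C : Set (G n))
    (g₂ g₃ : G n) (w : H) :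
    ∑ z : H, triBetween S (B ∩ coset H' (g₂ + z)) (C ∩ coset H' (g₃ + ↑(z + w))) ≤
      Nat.card H' * triBetween S (B ∩ coset H g₂) (C ∩ coset H g₃) := by
  have mem_coset {a g : G n} {z : H} (ha : a ∈ coset H' (g + z)) : a ∈ coset H g := by
    have := H.sub_mem (hle ha) z.2
    rwa [← add_assoc, add_sub_cancel_right] at this
  simp only [triBetween]
  rw [← Nat.card_sigma, ← Nat.card_prod]
  refine Nat.card_le_card_of_injective
    (fun t ↦ (⟨t.2.1.2.1 + (g₂ + t.1), t.2.2.2.1.2⟩, ⟨t.2.1, t.2.2.1,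
      ⟨t.2.2.2.1.1, mem_coset t.2.2.2.1.2⟩, ⟨t.2.2.2.2.1.1, mem_coset t.2.2.2.2.1.2⟩,
      t.2.2.2.2.2⟩)) ?_
  rintro ⟨z, p, hp⟩ ⟨z', p', hp'⟩ h
  simp only [Prod.mk.injEq, Subtype.mk.injEq] at h
  obtain ⟨hz, rfl⟩ := h
  obtain rfl : z = z' := Subtype.ext (add_left_cancel (add_left_cancel (congrArg Subtype.val hz)))
  rfl

end Averaging

theorem shattering_with_superregular_part_general {n : ℕ} {H' H : AddSubgroup (G n)}
    (hle : H' ≤ H) {g₁ g₂ g₃ : G n} (hg : g₁ + g₂ + g₃ ∈ H) (A B C : Set (G n)) {α β ρ : ℝ}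
    (hβ : 0 ≤ β) (hρ : 0 ≤ ρ) (hreg : SuperregularOn H' g₁ ρ (A.indicator 1)) :
    dens A H' g₁ * ((1 - 2 * α) * β ^ 2 * (dens B H g₂ * dens C H g₃) - ρ) *
        Nat.card H * Nat.card H' ≤
      triBetween (A ∩ coset H' g₁) (B ∩ coset H g₂) (C ∩ coset H g₃) ∨
    Shatters H' H B g₂ α β (Real.logb 2 (Nat.card H / Nat.card H')) ∨
    Shatters H' H C g₃ α β (Real.logb 2 (Nat.card H / Nat.card H')) := by
  rw [or_iff_not_imp_right, not_or, shatters_logb_iff, shatters_logb_iff, not_le, not_le]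
  rintro ⟨hB, hC⟩
  have hH' : (0 : ℝ) < Nat.card H' := by exact_mod_cast Nat.card_pos
  have hA := dens_nonneg A H' g₁
  have hBC := mul_nonneg (dens_nonneg B H g₂) (dens_nonneg C H g₃)
  let w : H := ⟨g₁ + g₂ + g₃, hg⟩
  have zero_sum (z : H) : g₁ + (g₂ + z) + (g₃ + ↑(z + w)) = 0 := by
    simp only [w, AddSubgroup.coe_add]
    linear_combination (g₁ + g₂ + g₃ + (z : G n)) * G.two_eq_zero
  refine le_of_mul_le_mul_left ?_ hH'
  calc Nat.card H' * (dens A H' g₁ * ((1 - 2 * α) * β ^ 2 * (dens B H g₂ * dens C H g₃) - ρ) *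
        Nat.card H * Nat.card H')
      = dens A H' g₁ * Nat.card H' ^ 2 * (β ^ 2 * (dens B H g₂ * dens C H g₃) *
          (Nat.card H - α * Nat.card H - α * Nat.card H) - Nat.card H * ρ) := by ring
    _ ≤ dens A H' g₁ * Nat.card H' ^ 2 *
          (∑ z : H, dens B H' (g₂ + z) * dens C H' (g₃ + ↑(z + w)) - Nat.card H * ρ) := by
        gcongr
        refine le_trans ?_ (le_sum_dens_mul_dens H' H B C g₂ g₃ w hβ)
        gcongr
    _ = ∑ z : H, dens A H' g₁ * (dens B H' (g₂ + z) * dens C H' (g₃ + ↑(z + w)) - ρ) *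
          Nat.card H' ^ 2 := by
        rw [← Finset.sum_mul, ← Finset.mul_sum, Finset.sum_sub_distrib, Finset.sum_const,
          Finset.card_univ, ← Nat.card_eq_fintype_card, nsmul_eq_mul]
        ring
    _ ≤ ∑ z : H, (triBetween (A ∩ coset H' g₁) (B ∩ coset H' (g₂ + z))
          (C ∩ coset H' (g₃ + ↑(z + w))) : ℝ) :=
        Finset.sum_le_sum fun z _ ↦ le_triBetween_of_superregularOn B C (zero_sum z) hρ hreg
    _ ≤ Nat.card H' * triBetween (A ∩ coset H' g₁) (B ∩ coset H g₂) (C ∩ coset H g₃) :=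
        mod_cast sum_triBetween_coset_le hle _ B C g₂ g₃ w

theorem shattering_with_superregular_part {n : ℕ} (H' H : AddSubgroup (G n))
    (hle : H' ≤ H) (g₁ g₂ g₃ : G n) (hg : g₁ + g₂ + g₃ = 0) (z₁ : G n) (hz : z₁ ∈ H)
    (A B C : Set (G n)) (d₁ d₂ d₃ : ℝ)
    (hd₁ : (Nat.card ↥(A ∩ coset H' (g₁ + z₁)) : ℝ) / (Nat.card ↥H' : ℝ) = d₁)
    (hd₂ : dens B H g₂ = d₂) (hd₃ : dens C H g₃ = d₃)
    (hreg : SuperregularOn H' (g₁ + z₁) (d₂ * d₃ / 4) (Set.indicator A 1)) :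
    (1 / 4 * (d₁ * d₂ * d₃) * (Nat.card ↥H : ℝ) * (Nat.card ↥H' : ℝ)
        ≤ (triBetween (A ∩ coset H' (g₁ + z₁)) (B ∩ coset H g₂) (C ∩ coset H g₃) : ℝ)) ∨
    Shatters H' H B g₂ (1 / 20) (3 / 4)
      (Real.logb 2 ((Nat.card ↥H : ℝ) / (Nat.card ↥H' : ℝ))) ∨
    Shatters H' H C g₃ (1 / 20) (3 / 4)
      (Real.logb 2 ((Nat.card ↥H : ℝ) / (Nat.card ↥H' : ℝ))) := by
  have hw : g₁ + z₁ + g₂ + g₃ ∈ H := by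
    rwa [show g₁ + z₁ + g₂ + g₃ = z₁ by linear_combination hg]
  subst hd₁ hd₂ hd₃
  have hBC := mul_nonneg (dens_nonneg B H g₂) (dens_nonneg C H g₃)
  refine (shattering_with_superregular_part_general hle hw A B C (by norm_num)
    (by positivity) hreg).imp_left (le_trans ?_)
  rw [← dens]
  gcongr ?_ * _ * _
  linarith [mul_nonneg (dens_nonneg A H' (g₁ + z₁)) hBC]
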